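/- arXiv:1907.07085 — 2 statements merged into one kernel-verified Lean document; each statement's English description precedes it below -/
import Mathlib

section
/- In the Poisson GLARMA model without covariates and with q=1, the Markov process (W_t*) is uniformly ergodic; in particular, it admits a unique stationary invariant probability measure, and when started from this stationary invariant distribution, (W_t*) is a strictly stationary and ergodic process. -/
/-!
The two-step kernel of the chain dominates a fixed multiple of a point mass. By Markov's
inequality a Poisson variable is below twice its mean with probability at least `1 / 2`, so one
step from any state leads below the level `M = β₀ - γ₁ + 2 |γ₁|` with probability at least
`1 / 2`; and from a state below `M` the next count is `0`, which sends the chain to `β₀ - γ₁`,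
with probability at least `exp (-exp M)`. Hence `P² (x, ·) ≥ e δ_{β₀ - γ₁}` for every `x`
(`gKer_minorization`).

A kernel `L ≥ e δ_a` splits as `e δ_a + R` with a residual kernel `R` of mass `1 - e`. Unfolding
the last visit to the atom, `π = e ∑ δ_a Rⁿ` is a probability measure and `Lⁿ (x, ·)` differs
from `π` by at most `(1 - e)ⁿ`, uniformly in `x` (`exists_uniform_limit`). Invariance and
uniqueness of `π` follow from the uniform convergence.

For the process itself, the conditional Poisson law of the counts gives the Markov property of
`W` with respect to the histories (`latent_isMarkov`). A stationary start makes the shift measure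
preserving on the path space. Uniform convergence of the iterated kernel makes two box cylinders
asymptotically independent when one is shifted far away (`mixing_box`). A π-λ argument replaces the shifted
cylinder by an arbitrary event; for an invariant event `B` the path law `Q` then satisfies
`Q (A ∩ B) = Q A * Q B` for all cylinders `A`, hence for `A = B`, so that `Q B` is `0` or `1`
(`ergodic_shift_of_mixing`).
-/

open MeasureTheory ProbabilityTheory Filter Matrix
open scoped ENNReal

noncomputable section

/-- The candidate GLARMA latent process `W_t(β₀, γ₁)` (no covariates, `q = 1`),
defined with the convention `E_t(γ₁) = 0` for `t ≤ 0`, so that `W_1 = β₀` and, for `t ≥ 2`,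
`W_t = β₀ + γ₁ (Y_{t-1} exp (-W_{t-1}) - 1)`.  Time is indexed by `ℕ`, observations start
at time `1` (the value at `0` is irrelevant and set to `β₀`). -/
def glarmaW (β₀ γ₁ : ℝ) (Y : ℕ → ℕ) : ℕ → ℝ
  | 0 => β₀
  | 1 => β₀
  | t + 2 => β₀ + γ₁ * ((Y (t + 1) : ℝ) * Real.exp (-(glarmaW β₀ γ₁ Y (t + 1))) - 1)

/-- The GLARMA criterion `L(β₀, γ₁) = ∑_{t=1}^n (Y_t W_t(β₀, γ₁) - exp (W_t(β₀, γ₁)))`. -/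
def glarmaL (β₀ γ₁ : ℝ) (Y : ℕ → ℕ) (n : ℕ) : ℝ :=
  ∑ t ∈ Finset.Icc 1 n, ((Y t : ℝ) * glarmaW β₀ γ₁ Y t - Real.exp (glarmaW β₀ γ₁ Y t))

/-- The Poisson probability mass function with (real) parameter `r`: `P(N = k)`. -/
def poissonP (r : ℝ) (k : ℕ) : ℝ := Real.exp (-r) * r ^ k / (Nat.factorial k : ℝ)

/-- The σ-algebra `σ(Y_1, …, Y_t)` generated by the observations up to time `t`. -/
def sigmaY {Ω : Type*} (Y : ℕ → Ω → ℕ) (t : ℕ) : MeasurableSpace Ω :=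
  ⨆ s ∈ Finset.Icc 1 t, MeasurableSpace.comap (Y s) ⊤

/-- The history σ-algebra `𝓕_t = σ(W_1, Y_1, …, Y_t)` of the GLARMA model (the initial
latent value `W_1` is included since the chain may be started at random, e.g. from its
stationary distribution). -/
def histSA {Ω : Type*} (W : ℕ → Ω → ℝ) (Y : ℕ → Ω → ℕ) (t : ℕ) : MeasurableSpace Ω :=
  MeasurableSpace.comap (W 1) inferInstance ⊔
    ⨆ s ∈ Finset.Icc 1 t, MeasurableSpace.comap (Y s) ⊤

/-- The σ-algebra `σ(W_1, …, W_t)` generated by the latent process up to time `t`. -/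
def sigmaW {Ω : Type*} (W : ℕ → Ω → ℝ) (t : ℕ) : MeasurableSpace Ω :=
  ⨆ s ∈ Finset.Icc 1 t, MeasurableSpace.comap (W s) inferInstance

/-- The limiting criterion `𝓛(γ₁) = E[Y₃ W₃(β₀, γ₁) - exp (W₃(β₀, γ₁))]`. -/
def glarmaLcal {Ω : Type*} [MeasurableSpace Ω] (μ : Measure Ω) (Y : ℕ → Ω → ℕ)
    (β₀ γ₁ : ℝ) : ℝ :=
  ∫ ω, ((Y 3 ω : ℝ) * glarmaW β₀ γ₁ (fun s => Y s ω) 3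
    - Real.exp (glarmaW β₀ γ₁ (fun s => Y s ω) 3)) ∂μ

/-- The Poisson distribution on `ℕ` with (real) parameter `r`. -/
def poissonMeas (r : ℝ) : Measure ℕ :=
  Measure.sum fun k => (ENNReal.ofReal (poissonP r k)) • Measure.dirac k

/-- The transition kernel of the latent Markov chain `(W_t)`:  given `W_{t-1} = x`, one has
`W_t = (β₀ - γ₁) + γ₁ Y_{t-1} exp (-x)` where `Y_{t-1} ∼ Poisson (exp x)`. -/
def glarmaKer (β₀ γ₁ : ℝ) (x : ℝ) : Measure ℝ :=
  Measure.map (fun k : ℕ => (β₀ - γ₁) + γ₁ * (k : ℝ) * Real.exp (-x)) (poissonMeas (Real.exp x))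

/-- The `n`-step transition kernel of the latent Markov chain. -/
def glarmaKerIter (β₀ γ₁ : ℝ) : ℕ → ℝ → Measure ℝ
  | 0, x => Measure.dirac x
  | n + 1, x => (glarmaKer β₀ γ₁ x).bind (glarmaKerIter β₀ γ₁ n)

/-- `stayProb β₀ γ₁ B m x` is the probability, starting from `W_{t-1} = x`, that the next `m`
states `W_t, …, W_{t+m-1}` of the latent chain all belong to `B`. -/
def stayProb (β₀ γ₁ : ℝ) (B : Set ℝ) : ℕ → ℝ → ℝ≥0∞
  | 0, _ => 1
  | m + 1, x => ∫⁻ y in B, stayProb β₀ γ₁ B m y ∂(glarmaKer β₀ γ₁ x)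

/-! ### Uniform ergodicity from a two-step atom -/

/-- The `n`-step kernel of a (sub-)Markov kernel, written so that the first step is taken
first: `kIter K (n + 1) x = (K x).bind (kIter K n)`. -/
def kIter {α : Type*} [MeasurableSpace α] (K : Kernel α α) : ℕ → Kernel α α
  | 0 => Kernel.id
  | n + 1 => (kIter K n) ∘ₖ K

section Doeblin

variable {α : Type*} [MeasurableSpace α]

instance kIter_markov (K : Kernel α α) [IsMarkovKernel K] (n : ℕ) :
    IsMarkovKernel (kIter K n) := by
  induction n with
  | zero => unfold kIter; infer_instance
  | succ n ih => unfold kIter; infer_instance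

lemma kIter_succ' (K : Kernel α α) (n : ℕ) : kIter K (n + 1) = K ∘ₖ kIter K n := by
  induction n with
  | zero => simp [kIter]
  | succ n ih =>
    rw [kIter, ih, Kernel.comp_assoc, ← ih]
    rfl

lemma lintegral_kIter_succ (K : Kernel α α) (n : ℕ) (x : α) {h : α → ℝ≥0∞}
    (hh : Measurable h) :
    ∫⁻ z, h z ∂(kIter K (n + 1) x) = ∫⁻ y, ∫⁻ z, h z ∂(kIter K n y) ∂(K x) := by
  rw [kIter, Kernel.lintegral_comp _ _ _ hh]

lemma kIter_two_mul (K : Kernel α α) (n : ℕ) : kIter K (2 * n) = kIter (K ∘ₖ K) n := by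
  induction n with
  | zero => rfl
  | succ n ih =>
    rw [show 2 * (n + 1) = 2 * n + 1 + 1 by ring, kIter, kIter, ih, kIter, Kernel.comp_assoc]

/-- The residual part `L x - ε δ_a` of a kernel `L` charging the atom `a` with mass at least `ε`. -/
def resid (L : Kernel α α) [IsMarkovKernel L] (a : α) (ε : ℝ≥0∞) (hε : ε ≤ 1)
    (hL : ∀ x, ε • Measure.dirac a ≤ L x) : Kernel α α where
  toFun x := L x - ε • Measure.dirac a
  measurable' := by
    have : IsFiniteMeasure (ε • Measure.dirac a) :=
      ⟨by simpa using hε.trans_lt ENNReal.one_lt_top⟩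
    refine Measure.measurable_of_measurable_coe _ fun s hs => ?_
    simp_rw [fun x => Measure.sub_apply hs (hL x)]
    exact (L.measurable_coe hs).sub_const _

variable (L : Kernel α α) [IsMarkovKernel L] (a : α) (ε : ℝ≥0∞) (hε : ε ≤ 1)
    (hL : ∀ x, ε • Measure.dirac a ≤ L x)

lemma resid_add (x : α) : resid L a ε hε hL x + ε • Measure.dirac a = L x := by
  have : IsFiniteMeasure (ε • Measure.dirac a) :=
    ⟨by simpa using hε.trans_lt ENNReal.one_lt_top⟩
  exact Measure.sub_add_cancel_of_le (hL x)

lemma resid_univ (x : α) : resid L a ε hε hL x Set.univ = 1 - ε := by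
  have h := congrArg (fun m => m Set.univ) (resid_add L a ε hε hL x)
  simp only [Measure.add_apply, Measure.smul_apply, measure_univ, smul_eq_mul, mul_one] at h
  exact ENNReal.eq_sub_of_add_eq (hε.trans_lt ENNReal.one_lt_top).ne h

lemma kIter_resid_univ (n : ℕ) (x : α) :
    kIter (resid L a ε hε hL) n x Set.univ = (1 - ε) ^ n := by
  induction n generalizing x with
  | zero => simp [kIter]
  | succ n ih =>
    rw [kIter, Kernel.comp_apply' _ _ _ .univ]
    simp_rw [ih]
    rw [lintegral_const, resid_univ, pow_succ]

/-- Splitting each step of `L` into the atom and the residual: conditionally on the last visit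
to the atom through the `ε`-part, the chain follows the residual kernel. -/
lemma lintegral_kIter_split (n : ℕ) (x : α) {h : α → ℝ≥0∞} (hh : Measurable h) :
    ∫⁻ z, h z ∂(kIter L n x) =
      ε * ∑ k ∈ Finset.range n, ∫⁻ z, h z ∂(kIter (resid L a ε hε hL) k a)
        + ∫⁻ z, h z ∂(kIter (resid L a ε hε hL) n x) := by
  induction n generalizing x with
  | zero => simp [kIter]
  | succ n ih =>
    rw [lintegral_kIter_succ _ _ _ hh]
    simp_rw [ih]
    rw [lintegral_add_left measurable_const, lintegral_const, measure_univ, mul_one]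
    conv_lhs => rw [← resid_add L a ε hε hL x]
    rw [lintegral_add_measure, lintegral_smul_measure,
      lintegral_dirac' _ (hh.lintegral_kernel), ← lintegral_kIter_succ _ _ _ hh,
      Finset.sum_range_succ, mul_add, smul_eq_mul]
    ring

/-- The regeneration formula for the invariant probability measure: `ε ∑ₙ δ_a Rⁿ`, where `R` is
the residual kernel. -/
def regenMeas : Measure α :=
  ε • Measure.sum fun n => kIter (resid L a ε hε hL) n a

lemma lintegral_regenMeas (h : α → ℝ≥0∞) :
    ∫⁻ z, h z ∂(regenMeas L a ε hε hL)
      = ε * ∑' n, ∫⁻ z, h z ∂(kIter (resid L a ε hε hL) n a) := by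
  rw [regenMeas, lintegral_smul_measure, lintegral_sum_measure, smul_eq_mul]

lemma tsum_eps_geom {ε : ℝ≥0∞} (hε : ε ≤ 1) (h0 : ε ≠ 0) : ε * ∑' n : ℕ, (1 - ε) ^ n = 1 := by
  rw [ENNReal.tsum_geometric, ENNReal.sub_sub_cancel ENNReal.one_ne_top hε,
    ENNReal.mul_inv_cancel h0 (hε.trans_lt ENNReal.one_lt_top).ne]

lemma regenMeas_prob (h0 : ε ≠ 0) : IsProbabilityMeasure (regenMeas L a ε hε hL) := by
  constructor
  rw [regenMeas, Measure.smul_apply, Measure.sum_apply _ .univ]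
  simp_rw [kIter_resid_univ]
  exact tsum_eps_geom hε h0

lemma lintegral_kIter_resid_le (n : ℕ) (x : α) {h : α → ℝ≥0∞} (h1 : ∀ z, h z ≤ 1) :
    ∫⁻ z, h z ∂(kIter (resid L a ε hε hL) n x) ≤ (1 - ε) ^ n := by
  refine (lintegral_mono h1).trans ?_
  rw [lintegral_one, kIter_resid_univ]

lemma lintegral_kIter_le_regen (n : ℕ) (x : α) {h : α → ℝ≥0∞} (hh : Measurable h)
    (h1 : ∀ z, h z ≤ 1) :
    ∫⁻ z, h z ∂(kIter L n x) ≤ ∫⁻ z, h z ∂(regenMeas L a ε hε hL) + (1 - ε) ^ n := by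
  rw [lintegral_kIter_split L a ε hε hL n x hh, lintegral_regenMeas]
  exact add_le_add (mul_le_mul_right (ENNReal.sum_le_tsum _) _)
    (lintegral_kIter_resid_le L a ε hε hL n x h1)

lemma regen_le_lintegral_kIter (h0 : ε ≠ 0) (n : ℕ) (x : α) {h : α → ℝ≥0∞} (hh : Measurable h)
    (h1 : ∀ z, h z ≤ 1) :
    ∫⁻ z, h z ∂(regenMeas L a ε hε hL) ≤ ∫⁻ z, h z ∂(kIter L n x) + (1 - ε) ^ n := by
  rw [lintegral_kIter_split L a ε hε hL n x hh, lintegral_regenMeas,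
    ← Summable.sum_add_tsum_nat_add' (f := fun k =>
      ∫⁻ z, h z ∂(kIter (resid L a ε hε hL) k a)) (k := n) ENNReal.summable, mul_add, add_assoc]
  refine add_le_add_right (le_trans ?_ le_add_self) _
  calc ε * ∑' i, ∫⁻ z, h z ∂(kIter (resid L a ε hε hL) (i + n) a)
      ≤ ε * ∑' i : ℕ, (1 - ε) ^ i * (1 - ε) ^ n := by
        refine mul_le_mul_right (ENNReal.tsum_le_tsum fun i => ?_) _
        rw [← pow_add]
        exact lintegral_kIter_resid_le L a ε hε hL _ _ h1
    _ = (1 - ε) ^ n := by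
        rw [ENNReal.tsum_mul_right, ← mul_assoc, tsum_eps_geom hε h0, one_mul]

end Doeblin

/-- **Doeblin's theorem**, for an atom reached in two steps with probability at least `ε`: there
is a probability measure to which the `n`-step kernels converge geometrically, uniformly over
the starting point and over test functions with values in `[0, 1]`. -/
lemma exists_uniform_limit {α : Type*} [MeasurableSpace α] (K : Kernel α α) [IsMarkovKernel K]
    (a : α) (ε : ℝ≥0∞) (hε : ε ≤ 1) (h0 : ε ≠ 0)
    (hK : ∀ x, ε • Measure.dirac a ≤ (K ∘ₖ K) x) :
    ∃ π : Measure α, IsProbabilityMeasure π ∧ ∀ (n : ℕ) (x : α) (h : α → ℝ≥0∞), Measurable h →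
      (∀ z, h z ≤ 1) →
      ∫⁻ z, h z ∂(kIter K n x) ≤ ∫⁻ z, h z ∂π + (1 - ε) ^ (n / 2) ∧
      ∫⁻ z, h z ∂π ≤ ∫⁻ z, h z ∂(kIter K n x) + (1 - ε) ^ (n / 2) := by
  refine ⟨regenMeas (K ∘ₖ K) a ε hε hK, regenMeas_prob _ a ε hε hK h0, ?_⟩
  have even : ∀ (k : ℕ) (x : α) (h : α → ℝ≥0∞), Measurable h → (∀ z, h z ≤ 1) →
      ∫⁻ z, h z ∂(kIter K (2 * k) x) ≤
        ∫⁻ z, h z ∂(regenMeas (K ∘ₖ K) a ε hε hK) + (1 - ε) ^ k ∧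
      ∫⁻ z, h z ∂(regenMeas (K ∘ₖ K) a ε hε hK) ≤
        ∫⁻ z, h z ∂(kIter K (2 * k) x) + (1 - ε) ^ k := by
    intro k x h hh h1
    rw [kIter_two_mul]
    exact ⟨lintegral_kIter_le_regen _ a ε hε hK k x hh h1,
      regen_le_lintegral_kIter _ a ε hε hK h0 k x hh h1⟩
  intro n x h hh h1
  obtain ⟨k, rfl | rfl⟩ := n.even_or_odd'
  · rw [Nat.mul_div_cancel_left _ two_pos]
    exact even k x h hh h1
  · rw [show (2 * k + 1) / 2 = k by omega, lintegral_kIter_succ _ _ _ hh]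
    constructor
    · refine (lintegral_mono fun y => (even k y h hh h1).1).trans ?_
      simp
    · have := lintegral_mono (μ := K x) fun y => (even k y h hh h1).2
      rwa [lintegral_const, measure_univ, mul_one, lintegral_add_right _ measurable_const,
        lintegral_const, measure_univ, mul_one] at this

/-! ### Invariance and uniqueness of the limit -/

section Consequences

variable {α : Type*} [MeasurableSpace α]

/-- The conclusion of Doeblin's theorem at rate `r`: `π` is the limit of the `n`-step kernels,
uniformly over the starting point and over test functions with values in `[0, 1]`. -/
def UnifConv (K : Kernel α α) (π : Measure α) (r : ℕ → ℝ≥0∞) : Prop :=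
  ∀ (n : ℕ) (x : α) (h : α → ℝ≥0∞), Measurable h → (∀ z, h z ≤ 1) →
    ∫⁻ z, h z ∂(kIter K n x) ≤ ∫⁻ z, h z ∂π + r n ∧
    ∫⁻ z, h z ∂π ≤ ∫⁻ z, h z ∂(kIter K n x) + r n

variable {K : Kernel α α} {π : Measure α} {r : ℕ → ℝ≥0∞}

/-- Convergence from an arbitrary finite initial measure. -/
lemma UnifConv.tendsto (H : UnifConv K π r) [IsFiniteMeasure π]
    (hr : Tendsto r atTop (nhds 0)) (ν : Measure α) [IsFiniteMeasure ν] {h : α → ℝ≥0∞}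
    (hh : Measurable h) (h1 : ∀ z, h z ≤ 1) :
    Tendsto (fun n => ∫⁻ x, ∫⁻ z, h z ∂(kIter K n x) ∂ν) atTop
      (nhds (ν Set.univ * ∫⁻ z, h z ∂π)) := by
  have hfin : ∫⁻ z, h z ∂π ≠ ∞ :=
    ((lintegral_mono h1).trans_lt (by simp [measure_lt_top])).ne
  have hrν : Tendsto (fun n => ν Set.univ * r n) atTop (nhds 0) := by
    simpa using ENNReal.Tendsto.const_mul hr (Or.inr (measure_ne_top ν Set.univ))
  have up : ∀ n, ∫⁻ x, ∫⁻ z, h z ∂(kIter K n x) ∂ν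
      ≤ ν Set.univ * ∫⁻ z, h z ∂π + ν Set.univ * r n := by
    intro n
    refine (lintegral_mono fun x => (H n x h hh h1).1).trans ?_
    rw [lintegral_const, mul_comm, mul_add]
  have lo : ∀ n, ν Set.univ * ∫⁻ z, h z ∂π - ν Set.univ * r n
      ≤ ∫⁻ x, ∫⁻ z, h z ∂(kIter K n x) ∂ν := by
    intro n
    have := lintegral_mono (μ := ν) fun x => (H n x h hh h1).2
    rw [lintegral_const, lintegral_add_right _ measurable_const, lintegral_const] at this
    rw [tsub_le_iff_right, mul_comm, mul_comm (ν _)]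
    exact this
  refine tendsto_of_tendsto_of_tendsto_of_le_of_le ?_ ?_ lo up
  · simpa using ENNReal.Tendsto.sub tendsto_const_nhds hrν
      (Or.inl (ENNReal.mul_ne_top (measure_ne_top ν Set.univ) hfin))
  · simpa using tendsto_const_nhds.add hrν

lemma UnifConv.tendsto_dirac (H : UnifConv K π r) [IsFiniteMeasure π]
    (hr : Tendsto r atTop (nhds 0)) (x : α) {h : α → ℝ≥0∞}
    (hh : Measurable h) (h1 : ∀ z, h z ≤ 1) :
    Tendsto (fun n => ∫⁻ z, h z ∂(kIter K n x)) atTop (nhds (∫⁻ z, h z ∂π)) := by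
  have := H.tendsto hr (Measure.dirac x) hh h1
  simpa [lintegral_dirac' _ hh.lintegral_kernel] using this

lemma UnifConv.invariant (H : UnifConv K π r) [IsProbabilityMeasure π] [IsMarkovKernel K]
    (hr : Tendsto r atTop (nhds 0)) : π.bind K = π := by
  ext s hs
  rw [Measure.bind_apply hs K.aemeasurable]
  obtain ⟨x⟩ : Nonempty α := nonempty_of_isProbabilityMeasure π
  have t1 := H.tendsto_dirac hr x (K.measurable_coe hs) (fun z => prob_le_one)
  have t2 := H.tendsto_dirac hr x (measurable_one.indicator hs)
    (h := s.indicator 1) (fun z => Set.indicator_le_self' (by simp) z)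
  have t3 := (tendsto_add_atTop_iff_nat 1).2 t2
  simp only [lintegral_indicator_one hs] at t3
  refine tendsto_nhds_unique t1 (t3.congr fun n => ?_)
  rw [kIter_succ', Kernel.comp_apply' _ _ _ hs]

lemma lintegral_kIter_of_invariant {π' : Measure α} (hinv : π'.bind K = π') (n : ℕ)
    {h : α → ℝ≥0∞} (hh : Measurable h) :
    ∫⁻ x, ∫⁻ z, h z ∂(kIter K n x) ∂π' = ∫⁻ z, h z ∂π' := by
  induction n with
  | zero => simp [kIter, Kernel.id_apply, lintegral_dirac' _ hh]
  | succ n ih =>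
    simp_rw [lintegral_kIter_succ _ _ _ hh]
    rw [← Measure.lintegral_bind K.aemeasurable hh.lintegral_kernel.aemeasurable, hinv, ih]

lemma UnifConv.unique (H : UnifConv K π r) [IsProbabilityMeasure π]
    (hr : Tendsto r atTop (nhds 0)) {π' : Measure α} [IsProbabilityMeasure π']
    (hinv : π'.bind K = π') : π' = π := by
  ext s hs
  have t := H.tendsto hr π' (measurable_one.indicator hs)
    (h := s.indicator 1) (fun z => Set.indicator_le_self' (by simp) z)
  simp_rw [lintegral_kIter_of_invariant hinv _ (measurable_one.indicator hs)] at t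
  simpa [lintegral_indicator_one hs] using tendsto_nhds_unique tendsto_const_nhds t

end Consequences

/-! ### Ergodicity of the path law of a stationary chain -/

section PathLaw

/-- `X` is a Markov chain with transition kernel `K` relative to the filtration `ℱ`, the Markov
property being tested against nonnegative functions on events of the past. -/
structure MarkovChainOn {Ω α : Type*} [mΩ : MeasurableSpace Ω] [MeasurableSpace α] (μ : Measure Ω)
    (ℱ : Filtration ℕ mΩ) (X : ℕ → Ω → α) (K : Kernel α α) : Prop where
  meas : ∀ n, Measurable[ℱ n] (X n)
  step : ∀ n (F : Set Ω), MeasurableSet[ℱ n] F → ∀ f : α → ℝ≥0∞, Measurable f →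
    ∫⁻ ω in F, f (X (n + 1) ω) ∂μ = ∫⁻ ω in F, ∫⁻ y, f y ∂(K (X n ω)) ∂μ

/-- The paths whose coordinates of index less than `k` lie in the prescribed sets. -/
def box {α : Type*} (k : ℕ) (S : ℕ → Set α) : Set (ℕ → α) := {w | ∀ i < k, w i ∈ S i}

/-- The shift on one-sided sequences. -/
def shift {α : Type*} (w : ℕ → α) : ℕ → α := fun i => w (i + 1)

lemma shift_iterate {α : Type*} (m : ℕ) (w : ℕ → α) (i : ℕ) : (shift^[m] w) i = w (m + i) := by
  induction m generalizing w with
  | zero => simp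
  | succ m ih => rw [Function.iterate_succ_apply, ih, shift]; congr 1; omega

variable {Ω α : Type*} [mΩ : MeasurableSpace Ω] [MeasurableSpace α]

/-- The probability that the chain started at `x` (at time `0`) has its path in `box k S`. -/
def boxProb (K : Kernel α α) : ℕ → (ℕ → Set α) → α → ℝ≥0∞
  | 0, _, _ => 1
  | k + 1, S, x => (S 0).indicator (fun x => ∫⁻ y, boxProb K k (fun i => S (i + 1)) y ∂(K x)) x

lemma measurable_boxProb (K : Kernel α α) (k : ℕ) (S : ℕ → Set α)
    (hS : ∀ i, MeasurableSet (S i)) : Measurable (boxProb K k S) := by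
  induction k generalizing S with
  | zero => exact measurable_const
  | succ k ih => exact ((ih _ fun i => hS (i + 1)).lintegral_kernel).indicator (hS 0)

lemma boxProb_le_one (K : Kernel α α) [IsMarkovKernel K] (k : ℕ) (S : ℕ → Set α) (x : α) :
    boxProb K k S x ≤ 1 := by
  induction k generalizing S x with
  | zero => exact le_rfl
  | succ k ih =>
    refine (Set.indicator_le_self _ _ x).trans ?_
    exact (lintegral_mono fun y => ih _ y).trans (by simp)

lemma measurableSet_box (k : ℕ) (S : ℕ → Set α) (hS : ∀ i, MeasurableSet (S i)) :
    MeasurableSet (box k S) := by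
  have : box k S = ⋂ i ∈ Finset.range k, (fun w : ℕ → α => w i) ⁻¹' (S i) := by
    ext w; simp [box]
  rw [this]
  exact Finset.measurableSet_biInter _ fun i _ => measurable_pi_apply i (hS i)

lemma measurable_shift : Measurable (shift : (ℕ → α) → (ℕ → α)) :=
  measurable_pi_lambda _ fun i => measurable_pi_apply (i + 1)

/-- The members of Mathlib's generating π-system of square cylinders are boxes: the unconstrained
coordinates below the largest index get the side `univ`. -/
lemma exists_box_of_mem {B : Set (ℕ → α)}
    (hB : B ∈ squareCylinders (fun _ : ℕ => {s : Set α | MeasurableSet s})) :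
    ∃ k S, (∀ i, MeasurableSet (S i)) ∧ B = box k S := by
  classical
  obtain ⟨s, t, ht, rfl⟩ := hB
  refine ⟨s.sup id + 1, fun i => if i ∈ s then t i else Set.univ, fun i => ?_, ?_⟩
  · by_cases hi : i ∈ s
    · simpa [hi] using ht i (Set.mem_univ i)
    · simp [hi]
  · ext w
    simp only [Set.mem_pi, box]
    constructor
    · intro h i _
      by_cases hi : i ∈ s
      · simpa [hi] using h i hi
      · simp [hi]
    · intro h i hi
      have hi' : i ∈ s := hi
      have := h i (Nat.lt_succ_of_le (Finset.le_sup (f := id) hi'))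
      simpa [hi'] using this

lemma measure_eq_of_box {Q Q' : Measure (ℕ → α)} [IsFiniteMeasure Q]
    (h : ∀ k S, (∀ i, MeasurableSet (S i)) → Q (box k S) = Q' (box k S)) : Q = Q' := by
  refine ext_of_generate_finite _ generateFrom_squareCylinders.symm
    (isPiSystem_squareCylinders (fun _ => MeasurableSpace.isPiSystem_measurableSet) (by simp))
    (fun B hB => ?_) ?_
  · obtain ⟨k, S, hS, rfl⟩ := exists_box_of_mem hB
    exact h k S hS
  · have := h 0 (fun _ => Set.univ) (fun _ => .univ)
    simpa [box] using this

namespace MarkovChainOn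

variable {μ : Measure Ω} {ℱ : Filtration ℕ mΩ} {X : ℕ → Ω → α} {K : Kernel α α}

lemma iter (H : MarkovChainOn μ ℱ X K) (m n : ℕ) {F : Set Ω} (hF : MeasurableSet[ℱ n] F)
    {f : α → ℝ≥0∞} (hf : Measurable f) :
    ∫⁻ ω in F, f (X (m + n) ω) ∂μ = ∫⁻ ω in F, ∫⁻ y, f y ∂(kIter K m (X n ω)) ∂μ := by
  induction m generalizing n with
  | zero => simp [kIter, Kernel.id_apply, lintegral_dirac' _ hf]
  | succ m ih =>
    rw [show m + 1 + n = m + (n + 1) by omega, ih (n + 1) (ℱ.mono n.le_succ _ hF),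
      H.step n F hF _ hf.lintegral_kernel]
    simp_rw [lintegral_kIter_succ _ _ _ hf]

lemma box_eq (H : MarkovChainOn μ ℱ X K) (k n : ℕ) {F : Set Ω} (hF : MeasurableSet[ℱ n] F)
    (S : ℕ → Set α) (hS : ∀ i, MeasurableSet (S i)) :
    μ (F ∩ {ω | ∀ i < k, X (n + i) ω ∈ S i}) = ∫⁻ ω in F, boxProb K k S (X n ω) ∂μ := by
  induction k generalizing n F S with
  | zero => simp [boxProb]
  | succ k ih =>
    have hG : MeasurableSet[ℱ n] (X n ⁻¹' S 0) := H.meas n (hS 0)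
    have hset : F ∩ {ω | ∀ i < k + 1, X (n + i) ω ∈ S i} =
        (F ∩ X n ⁻¹' S 0) ∩ {ω | ∀ i < k, X (n + 1 + i) ω ∈ S (i + 1)} := by
      ext ω
      simp only [Set.mem_inter_iff, Set.mem_preimage, and_assoc, and_congr_right_iff]
      intro _
      constructor
      · intro h
        refine ⟨h 0 k.succ_pos, fun i hi => ?_⟩
        have := h (i + 1) (by omega)
        rwa [show n + 1 + i = n + (i + 1) by omega]
      · rintro ⟨h0, h⟩ i hi
        rcases i with _ | i
        · exact h0
        · have := h i (by omega)
          rwa [show n + 1 + i = n + (i + 1) by omega] at this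
    rw [hset, ih (n + 1) (ℱ.mono n.le_succ _ (hF.inter hG)) _ (fun i => hS (i + 1)),
      H.step n _ (hF.inter hG) _ (measurable_boxProb K k _ fun i => hS (i + 1)),
      Set.inter_comm, ← setLIntegral_indicator (ℱ.le n _ hG)]
    rfl

lemma measurable_path (H : MarkovChainOn μ ℱ X K) : Measurable (fun ω i => X i ω) :=
  measurable_pi_lambda _ fun i => (H.meas i).mono (ℱ.le i) le_rfl

variable {π : Measure α}

lemma map_eq (H : MarkovChainOn μ ℱ X K) (hπ : π.bind K = π) (h0 : μ.map (X 0) = π) (n : ℕ) :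
    μ.map (X n) = π := by
  have hm : ∀ n, Measurable (X n) := fun n => (H.meas n).mono (ℱ.le n) le_rfl
  induction n with
  | zero => exact h0
  | succ n ih =>
    refine Measure.ext_of_lintegral _ fun f hf => ?_
    rw [lintegral_map hf (hm _)]
    have := H.step n Set.univ .univ f hf
    rw [setLIntegral_univ, setLIntegral_univ] at this
    rw [this, ← lintegral_map (f := fun x => ∫⁻ y, f y ∂(K x)) hf.lintegral_kernel (hm n), ih,
      ← Measure.lintegral_bind K.aemeasurable hf.aemeasurable, hπ]

lemma path_box (H : MarkovChainOn μ ℱ X K) (hπ : π.bind K = π) (h0 : μ.map (X 0) = π) (n k : ℕ)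
    (S : ℕ → Set α) (hS : ∀ i, MeasurableSet (S i)) :
    μ {ω | ∀ i < k, X (n + i) ω ∈ S i} = ∫⁻ x, boxProb K k S x ∂π := by
  have := H.box_eq k n .univ S hS
  rw [Set.univ_inter, setLIntegral_univ] at this
  rw [this, ← H.map_eq hπ h0 n, lintegral_map (measurable_boxProb K k S hS)
    ((H.meas n).mono (ℱ.le n) le_rfl)]

lemma measurePreserving_shift [IsProbabilityMeasure μ] (H : MarkovChainOn μ ℱ X K)
    (hπ : π.bind K = π) (h0 : μ.map (X 0) = π) :
    MeasurePreserving shift (μ.map fun ω i => X i ω) (μ.map fun ω i => X i ω) := by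
  refine ⟨measurable_shift, ?_⟩
  have : IsProbabilityMeasure (μ.map fun ω i => X i ω) :=
    Measure.isProbabilityMeasure_map H.measurable_path.aemeasurable
  have := Measure.isProbabilityMeasure_map (μ := μ.map fun ω i => X i ω)
    (measurable_shift (α := α)).aemeasurable
  refine measure_eq_of_box fun k S hS => ?_
  rw [Measure.map_apply measurable_shift (measurableSet_box k S hS),
    Measure.map_apply H.measurable_path (measurable_shift (measurableSet_box k S hS)),
    Measure.map_apply H.measurable_path (measurableSet_box k S hS)]
  have e1 := H.path_box hπ h0 1 k S hS
  have e0 := H.path_box hπ h0 0 k S hS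
  simp_rw [fun i => show 0 + i = i by omega] at e0
  simp_rw [fun i => show 1 + i = i + 1 by omega] at e1
  exact e1.trans e0.symm

/-- Mixing on boxes: uniform ergodicity makes a box asymptotically independent of the far
translates of another box. -/
lemma mixing_box [IsProbabilityMeasure μ] [IsMarkovKernel K] [IsProbabilityMeasure π]
    {r : ℕ → ℝ≥0∞} (H : MarkovChainOn μ ℱ X K) (hU : UnifConv K π r)
    (hr : Tendsto r atTop (nhds 0)) (h0 : μ.map (X 0) = π)
    (n k : ℕ) (S T : ℕ → Set α) (hS : ∀ i, MeasurableSet (S i)) (hT : ∀ i, MeasurableSet (T i)) :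
    Tendsto (fun m => (μ.map fun ω i => X i ω) (box n S ∩ shift^[m] ⁻¹' box k T)) atTop
      (nhds ((μ.map fun ω i => X i ω) (box n S) * (μ.map fun ω i => X i ω) (box k T))) := by
  have hπ : π.bind K = π := hU.invariant hr
  have hXn : Measurable (X n) := (H.meas n).mono (ℱ.le n) le_rfl
  set F : Set Ω := {ω | ∀ i < n, X i ω ∈ S i} with hFdef
  have hF : MeasurableSet[ℱ n] F := by
    have : F = ⋂ i ∈ Finset.range n, X i ⁻¹' S i := by ext ω; simp [F]
    rw [this]
    exact Finset.measurableSet_biInter _ fun i hi =>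
      ℱ.mono (Finset.mem_range.1 hi).le _ (H.meas i (hS i))
  have hFA : (μ.map fun ω i => X i ω) (box n S) = μ F := by
    rw [Measure.map_apply H.measurable_path (measurableSet_box n S hS)]; rfl
  have hB : (μ.map fun ω i => X i ω) (box k T) = ∫⁻ x, boxProb K k T x ∂π := by
    rw [Measure.map_apply H.measurable_path (measurableSet_box k T hT), ← H.path_box hπ h0 0 k T hT]
    simp_rw [zero_add]
    rfl
  have hb := measurable_boxProb K k T hT
  have lim := hU.tendsto hr ((μ.restrict F).map (X n)) hb (boxProb_le_one K k T)
  rw [Measure.map_apply hXn .univ, Set.preimage_univ, Measure.restrict_apply_univ, ← hB,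
    ← hFA] at lim
  refine (tendsto_add_atTop_iff_nat n).1 (lim.congr fun m => ?_)
  rw [lintegral_map hb.lintegral_kernel hXn, ← H.iter m n hF hb,
    ← H.box_eq k (m + n) (ℱ.mono (by omega) _ hF) T hT,
    Measure.map_apply H.measurable_path ((measurableSet_box n S hS).inter
      (measurable_shift.iterate _ (measurableSet_box k T hT)))]
  congr 1
  ext ω
  simp [F, box, shift_iterate]

end MarkovChainOn

/-- A shift-invariant law that is mixing on boxes is ergodic: mixing extends from the boxes to all
events, first in the translated event and then in the fixed one, so that an invariant event is
independent of itself. -/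
lemma ergodic_shift_of_mixing {Q : Measure (ℕ → α)} [IsProbabilityMeasure Q]
    (hQ : MeasurePreserving shift Q Q)
    (hmix : ∀ n k (S T : ℕ → Set α), (∀ i, MeasurableSet (S i)) → (∀ i, MeasurableSet (T i)) →
      Tendsto (fun m => Q (box n S ∩ shift^[m] ⁻¹' box k T)) atTop
        (nhds (Q (box n S) * Q (box k T)))) :
    Ergodic shift Q := by
  have hsh : ∀ m, MeasurePreserving (shift^[m]) Q Q := fun m => hQ.iterate m
  have step : ∀ n (S : ℕ → Set α), (∀ i, MeasurableSet (S i)) → ∀ B, MeasurableSet B →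
      Tendsto (fun m => Q (box n S ∩ shift^[m] ⁻¹' B)) atTop (nhds (Q (box n S) * Q B)) := by
    intro n S hS B hB
    have hA := measurableSet_box n S hS
    induction B, hB using MeasurableSpace.induction_on_inter
      (generateFrom_squareCylinders (α := fun _ : ℕ => α)).symm
      (isPiSystem_squareCylinders (fun _ => MeasurableSpace.isPiSystem_measurableSet)
        (by simp)) with
    | empty => simp
    | basic t ht =>
      obtain ⟨k, T, hT, rfl⟩ := exists_box_of_mem ht
      exact hmix n k S T hS hT
    | compl t ht ih =>
      have e : ∀ m, Q (box n S ∩ shift^[m] ⁻¹' tᶜ)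
          = Q (box n S) - Q (box n S ∩ shift^[m] ⁻¹' t) := by
        intro m
        rw [← measure_sdiff Set.inter_subset_left
          (hA.inter ((hsh m).measurable ht)).nullMeasurableSet (measure_ne_top _ _)]
        congr 1
        ext w
        simp
      simp_rw [e]
      rw [prob_compl_eq_one_sub ht, ENNReal.mul_sub (fun _ _ => measure_ne_top _ _), mul_one]
      exact ENNReal.Tendsto.sub tendsto_const_nhds ih (Or.inl (measure_ne_top _ _))
    | iUnion f hd hf ih =>
      have e : ∀ m, Q (box n S ∩ shift^[m] ⁻¹' ⋃ i, f i)
          = ∫⁻ i, Q (box n S ∩ shift^[m] ⁻¹' f i) ∂Measure.count := by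
        intro m
        rw [lintegral_count, Set.preimage_iUnion, Set.inter_iUnion]
        refine measure_iUnion (fun i j hij => ?_) fun i => hA.inter ((hsh m).measurable (hf i))
        exact ((hd hij).preimage _).mono Set.inter_subset_right Set.inter_subset_right
      have e' : Q (box n S) * Q (⋃ i, f i) = ∫⁻ i, Q (box n S) * Q (f i) ∂Measure.count := by
        rw [lintegral_count, ENNReal.tsum_mul_left, measure_iUnion hd hf]
      simp_rw [e]
      rw [e']
      refine tendsto_lintegral_of_dominated_convergence (fun i => Q (f i))
        (fun m => measurable_of_countable _) (fun m => ae_of_all _ fun i => ?_) ?_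
        (ae_of_all _ fun i => ih i)
      · exact (measure_mono Set.inter_subset_right).trans_eq
          ((hsh m).measure_preimage (hf i).nullMeasurableSet)
      · rw [lintegral_count, ← measure_iUnion hd hf]
        exact measure_ne_top _ _
  refine ⟨hQ, ⟨fun B hB hinv => ?_⟩⟩
  have hinvm : ∀ m, shift^[m] ⁻¹' B = B := by
    intro m
    induction m with
    | zero => rfl
    | succ m ih => rw [Function.iterate_succ, Set.preimage_comp, ih, hinv]
  have hind : Q.restrict B = Q B • Q := by
    refine measure_eq_of_box fun n S hS => ?_
    have t := step n S hS B hB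
    simp_rw [hinvm] at t
    rw [Measure.restrict_apply (measurableSet_box n S hS), Measure.smul_apply, smul_eq_mul,
      mul_comm]
    exact tendsto_nhds_unique tendsto_const_nhds t
  have hsq : Q B = Q B * Q B := by
    have := congrArg (fun m => m B) hind
    simpa [Measure.restrict_apply hB] using this
  rw [eventuallyConst_set']
  by_cases hz : Q B = 0
  · left
    exact ae_eq_empty.2 hz
  · right
    have h1 : Q B = 1 := by
      have := (ENNReal.mul_eq_left hz (measure_ne_top Q B)).1 hsq.symm
      exact this
    rw [ae_eq_univ]
    rw [prob_compl_eq_one_sub hB, h1, tsub_self]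

end PathLaw

/-! ### The GLARMA transition kernel -/

section GlarmaKernel

lemma poissonP_nonneg {r : ℝ} (hr : 0 ≤ r) (k : ℕ) : 0 ≤ poissonP r k := by
  unfold poissonP; positivity

lemma tsum_poissonP {r : ℝ} (hr : 0 ≤ r) : ∑' k, ENNReal.ofReal (poissonP r k) = 1 := by
  have h : HasSum (poissonP r) 1 := hasSum_one_poissonMeasure ⟨r, hr⟩
  rw [← ENNReal.ofReal_tsum_of_nonneg (poissonP_nonneg hr) h.summable, h.tsum_eq,
    ENNReal.ofReal_one]

lemma lintegral_poissonMeas (r : ℝ) (f : ℕ → ℝ≥0∞) :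
    ∫⁻ k, f k ∂(poissonMeas r) = ∑' k, ENNReal.ofReal (poissonP r k) * f k := by
  rw [poissonMeas, lintegral_sum_measure]
  simp

lemma poissonMeas_prob {r : ℝ} (hr : 0 ≤ r) : IsProbabilityMeasure (poissonMeas r) := by
  constructor
  rw [← lintegral_one, lintegral_poissonMeas]
  simpa using tsum_poissonP hr

lemma poissonMeas_mean {r : ℝ} (hr : 0 ≤ r) :
    ∫⁻ k, (k : ℝ≥0∞) ∂(poissonMeas r) = ENNReal.ofReal r := by
  rw [lintegral_poissonMeas, tsum_eq_zero_add' ENNReal.summable]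
  have : ∀ k : ℕ, ENNReal.ofReal (poissonP r (k + 1)) * ((k + 1 : ℕ) : ℝ≥0∞)
      = ENNReal.ofReal r * ENNReal.ofReal (poissonP r k) := by
    intro k
    rw [← ENNReal.ofReal_natCast, ← ENNReal.ofReal_mul (poissonP_nonneg hr _),
      ← ENNReal.ofReal_mul hr]
    congr 1
    unfold poissonP
    rw [Nat.factorial_succ]
    have : (Nat.factorial k : ℝ) ≠ 0 := by positivity
    push_cast
    field_simp
    ring
  simp_rw [this]
  rw [ENNReal.tsum_mul_left, tsum_poissonP hr]
  simp

/-- Markov's inequality: a Poisson variable is below twice its mean with probability at least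
`1 / 2`. -/
lemma half_le_poissonMeas {r : ℝ} (hr : 0 < r) :
    ENNReal.ofReal (1 / 2) ≤ poissonMeas r {k : ℕ | (k : ℝ) < 2 * r} := by
  have := poissonMeas_prob hr.le
  have h := mul_meas_ge_le_lintegral₀ (μ := poissonMeas r) (f := fun k : ℕ => (k : ℝ≥0∞))
    (measurable_of_countable _).aemeasurable (ENNReal.ofReal (2 * r))
  rw [poissonMeas_mean hr.le] at h
  have hset : {k : ℕ | ENNReal.ofReal (2 * r) ≤ (k : ℝ≥0∞)} = {k : ℕ | (k : ℝ) < 2 * r}ᶜ := by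
    ext k
    simp only [Set.mem_ofPred_eq, Set.mem_compl_iff, not_lt]
    rw [← ENNReal.ofReal_natCast, ENNReal.ofReal_le_ofReal_iff (Nat.cast_nonneg k)]
  rw [hset, prob_compl_eq_one_sub (MeasurableSet.of_discrete)] at h
  set q := poissonMeas r {k : ℕ | (k : ℝ) < 2 * r} with hq
  have hq1 : q ≤ 1 := prob_le_one
  have hqr : q = ENNReal.ofReal q.toReal :=
    (ENNReal.ofReal_toReal (hq1.trans_lt ENNReal.one_lt_top).ne).symm
  rw [hqr, ← ENNReal.ofReal_one, ← ENNReal.ofReal_sub _ ENNReal.toReal_nonneg,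
    ← ENNReal.ofReal_mul (by positivity), ENNReal.ofReal_le_ofReal_iff hr.le] at h
  rw [hqr]
  apply ENNReal.ofReal_le_ofReal
  nlinarith

lemma lintegral_glarmaKer (β₀ γ₁ x : ℝ) {f : ℝ → ℝ≥0∞} (hf : Measurable f) :
    ∫⁻ y, f y ∂(glarmaKer β₀ γ₁ x) = ∑' k : ℕ, ENNReal.ofReal (poissonP (Real.exp x) k) *
      f ((β₀ - γ₁) + γ₁ * (k : ℝ) * Real.exp (-x)) := by
  rw [glarmaKer, lintegral_map hf (measurable_of_countable _), lintegral_poissonMeas]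

lemma measurable_poissonP (k : ℕ) : Measurable fun x => poissonP (Real.exp x) k := by
  unfold poissonP; fun_prop

/-- `glarmaKer` bundled as a kernel. -/
def gKer (β₀ γ₁ : ℝ) : Kernel ℝ ℝ where
  toFun := glarmaKer β₀ γ₁
  measurable' := by
    refine Measure.measurable_of_measurable_coe _ fun s hs => ?_
    simp_rw [← lintegral_indicator_one hs,
      lintegral_glarmaKer _ _ _ (measurable_one.indicator hs : Measurable (s.indicator 1))]
    refine Measurable.tsum fun k => (measurable_poissonP k).ennreal_ofReal.mul ?_
    exact (measurable_one.indicator hs).comp (by fun_prop)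

lemma gKer_apply (β₀ γ₁ x : ℝ) : gKer β₀ γ₁ x = glarmaKer β₀ γ₁ x := rfl

instance gKer_markov (β₀ γ₁ : ℝ) : IsMarkovKernel (gKer β₀ γ₁) := by
  refine ⟨fun x => ?_⟩
  have := poissonMeas_prob (Real.exp_pos x).le
  exact Measure.isProbabilityMeasure_map (measurable_of_countable _).aemeasurable

lemma glarmaKerIter_eq (β₀ γ₁ : ℝ) (n : ℕ) (x : ℝ) :
    glarmaKerIter β₀ γ₁ n x = kIter (gKer β₀ γ₁) n x := by
  induction n generalizing x with
  | zero => simp [glarmaKerIter, kIter, Kernel.id_apply]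
  | succ n ih =>
    rw [glarmaKerIter, kIter, Kernel.comp_apply, gKer_apply, funext ih]

lemma half_le_gKer_Iic (β₀ γ₁ x : ℝ) :
    ENNReal.ofReal (1 / 2) ≤ gKer β₀ γ₁ x (Set.Iic (β₀ - γ₁ + 2 * |γ₁|)) := by
  rw [gKer_apply, glarmaKer, Measure.map_apply (measurable_of_countable _) measurableSet_Iic]
  refine (half_le_poissonMeas (Real.exp_pos x)).trans (measure_mono fun k hk => ?_)
  have hk : (k : ℝ) < 2 * Real.exp x := hk
  have h1 : (k : ℝ) * Real.exp (-x) ≤ 2 := by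
    calc (k : ℝ) * Real.exp (-x) ≤ 2 * Real.exp x * Real.exp (-x) := by gcongr
      _ = 2 := by rw [mul_assoc, ← Real.exp_add]; simp
  have h2 : γ₁ * ((k : ℝ) * Real.exp (-x)) ≤ |γ₁| * 2 :=
    (mul_le_mul_of_nonneg_right (le_abs_self γ₁) (by positivity)).trans
      (mul_le_mul_of_nonneg_left h1 (abs_nonneg _))
  simp only [Set.mem_preimage, Set.mem_Iic]
  linarith

/-- From a state `y`, the observation `0`, hence the state `β₀ - γ₁`, has probability
`exp (-exp y)`. -/
lemma le_gKer_of_mem (β₀ γ₁ y : ℝ) {s : Set ℝ} (hs : MeasurableSet s) (ha : β₀ - γ₁ ∈ s) :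
    ENNReal.ofReal (Real.exp (-Real.exp y)) ≤ gKer β₀ γ₁ y s := by
  rw [← lintegral_indicator_one hs, gKer_apply,
    lintegral_glarmaKer _ _ _ (measurable_one.indicator hs : Measurable (s.indicator 1))]
  refine le_trans ?_ (ENNReal.le_tsum 0)
  simp [ha, poissonP]

/-- The two-step minorization: within one step the chain falls below a fixed level with
probability at least `1 / 2`, and from there it jumps to `β₀ - γ₁` with probability bounded
below. -/
lemma gKer_minorization (β₀ γ₁ x : ℝ) :
    ENNReal.ofReal (Real.exp (-Real.exp (β₀ - γ₁ + 2 * |γ₁|)) * (1 / 2)) •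
      Measure.dirac (β₀ - γ₁) ≤ (gKer β₀ γ₁ ∘ₖ gKer β₀ γ₁) x := by
  refine Measure.le_iff.2 fun s hs => ?_
  rw [Measure.smul_apply, Measure.dirac_apply' _ hs, Kernel.comp_apply' _ _ _ hs]
  by_cases ha : β₀ - γ₁ ∈ s
  · rw [Set.indicator_of_mem ha, Pi.one_apply, smul_eq_mul, mul_one,
      ENNReal.ofReal_mul (Real.exp_pos _).le]
    set M := β₀ - γ₁ + 2 * |γ₁|
    calc ENNReal.ofReal (Real.exp (-Real.exp M)) * ENNReal.ofReal (1 / 2)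
        ≤ ENNReal.ofReal (Real.exp (-Real.exp M)) * gKer β₀ γ₁ x (Set.Iic M) := by
          gcongr
          exact half_le_gKer_Iic β₀ γ₁ x
      _ = ∫⁻ _ in Set.Iic M, ENNReal.ofReal (Real.exp (-Real.exp M)) ∂(gKer β₀ γ₁ x) := by
          rw [setLIntegral_const]
      _ ≤ ∫⁻ y in Set.Iic M, gKer β₀ γ₁ y s ∂(gKer β₀ γ₁ x) := by
          refine setLIntegral_mono ((gKer β₀ γ₁).measurable_coe hs) fun y hy => ?_
          refine le_trans ?_ (le_gKer_of_mem β₀ γ₁ y hs ha)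
          have hy : y ≤ M := hy
          gcongr
      _ ≤ _ := setLIntegral_le_lintegral _ _
  · simp [ha]

end GlarmaKernel

/-! ### The Markov property of the latent process -/

section Markov


/-- Integrating a nonnegative function known to `m` over an event replaces the event by a version
of its conditional probability given `m`. -/
lemma setLIntegral_of_condExp {Ω : Type*} {m mΩ : MeasurableSpace Ω} {μ : Measure Ω}
    [IsProbabilityMeasure μ] (hm : m ≤ mΩ) {A : Set Ω}
    (hA : MeasurableSet A) {p : Ω → ℝ} (hpm : Measurable p) (hp0 : ∀ ω, 0 ≤ p ω)
    (hp : μ[A.indicator (fun _ => (1 : ℝ)) | m] =ᵐ[μ] p) {φ : Ω → ℝ≥0∞}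
    (hφ : Measurable[m] φ) :
    ∫⁻ ω in A, φ ω ∂μ = ∫⁻ ω, ENNReal.ofReal (p ω) * φ ω ∂μ := by
  have hint : Integrable p μ := integrable_condExp.congr hp
  have key : (μ.restrict A).trim hm = (μ.withDensity fun ω => ENNReal.ofReal (p ω)).trim hm := by
    refine @Measure.ext _ m _ _ fun G hG => ?_
    rw [trim_measurableSet_eq hm hG, trim_measurableSet_eq hm hG, withDensity_apply _ (hm _ hG),
      Measure.restrict_apply (hm _ hG),
      ← ofReal_integral_eq_lintegral_ofReal hint.integrableOn (ae_of_all _ hp0),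
      ← setIntegral_congr_ae (hm _ hG) (hp.mono fun ω h _ => h),
      setIntegral_condExp hm ((integrable_const _).indicator hA) hG,
      setIntegral_indicator hA, setIntegral_const, smul_eq_mul, mul_one, ofReal_measureReal]
  rw [← lintegral_trim hm hφ, key, lintegral_trim hm hφ,
    lintegral_withDensity_eq_lintegral_mul _ hpm.ennreal_ofReal (hφ.mono hm le_rfl)]
  rfl

lemma measurable_Y_hist {Ω : Type*} {Y : ℕ → Ω → ℕ} {W : ℕ → Ω → ℝ} {n t : ℕ}
    (h1 : 1 ≤ t) (hn : t ≤ n) : Measurable[histSA W Y n] (Y t) := by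
  refine Measurable.of_comap_le (le_trans ?_ le_sup_right)
  exact le_iSup₂_of_le (f := fun s (_ : s ∈ Finset.Icc 1 n) => MeasurableSpace.comap (Y s) ⊤)
    t (Finset.mem_Icc.2 ⟨h1, hn⟩) le_rfl

variable {Ω : Type*} [mΩ : MeasurableSpace Ω] {μ : Measure Ω} [IsProbabilityMeasure μ]
  {Y : ℕ → Ω → ℕ} {W : ℕ → Ω → ℝ}

/-- The histories `σ(W_1, Y_1, …, Y_n)` form a filtration. -/
def histFiltration (hY : ∀ t, Measurable (Y t)) (hW : ∀ t, Measurable (W t)) :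
    Filtration ℕ mΩ where
  seq := histSA W Y
  mono' := fun i j hij => by
    refine sup_le_sup le_rfl (biSup_mono fun s hs => ?_)
    simp only [Finset.mem_Icc] at hs ⊢
    omega
  le' := fun n => by
    refine sup_le (hW 1).comap_le (iSup₂_le fun s _ => (hY s).comap_le)

lemma latent_isMarkov {β₀ γ₁ : ℝ} (hY : ∀ t, Measurable (Y t)) (hW : ∀ t, Measurable (W t))
    (hrec : ∀ t, 2 ≤ t → ∀ ω,
      W t ω = β₀ + γ₁ * ((Y (t - 1) ω : ℝ) * Real.exp (-(W (t - 1) ω)) - 1))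
    (hpois : ∀ t, 1 ≤ t → ∀ k : ℕ,
      (μ[(fun ω => if Y t ω = k then (1 : ℝ) else 0) | histSA W Y (t - 1)])
        =ᵐ[μ] fun ω => poissonP (Real.exp (W t ω)) k) :
    MarkovChainOn μ (histFiltration hY hW) (fun i => W (i + 1)) (gKer β₀ γ₁) := by
  have hrec' : ∀ n ω, W (n + 1 + 1) ω
      = (β₀ - γ₁) + γ₁ * (Y (n + 1) ω : ℝ) * Real.exp (-(W (n + 1) ω)) := by
    intro n ω
    rw [hrec (n + 1 + 1) (by omega) ω, Nat.add_sub_cancel]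
    ring
  have hmeas : ∀ n, Measurable[histSA W Y n] (W (n + 1)) := by
    intro n
    induction n with
    | zero => exact Measurable.of_comap_le le_sup_left
    | succ n ih =>
      have ih' : Measurable[histSA W Y (n + 1)] (W (n + 1)) :=
        ih.mono ((histFiltration hY hW).mono n.le_succ) le_rfl
      have hYn : Measurable[histSA W Y (n + 1)] (Y (n + 1)) :=
        measurable_Y_hist (by omega) le_rfl
      rw [funext (hrec' n)]
      have hg : Measurable fun q : ℕ × ℝ => (β₀ - γ₁) + γ₁ * (q.1 : ℝ) * Real.exp (-q.2) := by
        fun_prop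
      exact hg.comp (hYn.prodMk ih')
  refine ⟨hmeas, fun n F hF f hf => ?_⟩
  have hm : histSA W Y n ≤ mΩ := (histFiltration hY hW).le n
  set g : ℕ → ℝ → ℝ := fun k x => (β₀ - γ₁) + γ₁ * (k : ℝ) * Real.exp (-x) with hg
  have hgm : ∀ k, Measurable (g k) := fun k => by simp only [hg]; fun_prop
  -- each value `k` of the observation contributes separately
  have hterm : ∀ k : ℕ, ∫⁻ ω in F, (Y (n + 1) ⁻¹' {k}).indicator
        (fun ω => f (g k (W (n + 1) ω))) ω ∂μ
      = ∫⁻ ω in F, ENNReal.ofReal (poissonP (Real.exp (W (n + 1) ω)) k)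
          * f (g k (W (n + 1) ω)) ∂μ := by
    intro k
    have hA : MeasurableSet (Y (n + 1) ⁻¹' {k}) := hY (n + 1) (measurableSet_singleton k)
    have hφ : Measurable[histSA W Y n] (F.indicator fun ω => f (g k (W (n + 1) ω))) :=
      Measurable.indicator ((hf.comp (hgm k)).comp (hmeas n)) hF
    have h := setLIntegral_of_condExp (μ := μ) hm hA
      (p := fun ω => poissonP (Real.exp (W (n + 1) ω)) k)
      ((measurable_poissonP k).comp (hW (n + 1)))
      (fun ω => poissonP_nonneg (Real.exp_pos _).le k)
      (by
        have := hpois (n + 1) (by omega) k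
        rw [Nat.add_sub_cancel] at this
        have hind : (Y (n + 1) ⁻¹' {k}).indicator (fun _ => (1 : ℝ))
            = fun ω => if Y (n + 1) ω = k then 1 else 0 := by
          funext ω
          by_cases h : Y (n + 1) ω = k <;> simp [Set.indicator, h]
        rwa [hind]) hφ
    rw [← lintegral_indicator (hm _ hF), ← lintegral_indicator (hm _ hF)]
    rw [← lintegral_indicator hA] at h
    refine Eq.trans ?_ (h.trans ?_)
    · refine lintegral_congr fun ω => ?_
      rw [Set.indicator_indicator, Set.indicator_indicator, Set.inter_comm]
    · refine lintegral_congr fun ω => ?_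
      by_cases hω : ω ∈ F <;> simp [hω]
  calc ∫⁻ ω in F, f (W (n + 1 + 1) ω) ∂μ
      = ∫⁻ ω in F, ∑' k : ℕ, (Y (n + 1) ⁻¹' {k}).indicator
          (fun ω => f (g k (W (n + 1) ω))) ω ∂μ := by
        refine lintegral_congr fun ω => ?_
        rw [tsum_eq_single (Y (n + 1) ω)]
        · rw [Set.indicator_of_mem (by simp), hrec' n ω]
        · intro k hk
          exact Set.indicator_of_notMem (s := Y (n + 1) ⁻¹' {k})
            (by simpa using fun h => hk (Eq.symm h)) _
    _ = ∑' k : ℕ, ∫⁻ ω in F, (Y (n + 1) ⁻¹' {k}).indicator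
          (fun ω => f (g k (W (n + 1) ω))) ω ∂μ :=
        lintegral_tsum fun k => (((hf.comp (hgm k)).comp (hW (n + 1))).indicator
          (hY (n + 1) (measurableSet_singleton k))).aemeasurable
    _ = ∑' k : ℕ, ∫⁻ ω in F, ENNReal.ofReal (poissonP (Real.exp (W (n + 1) ω)) k)
          * f (g k (W (n + 1) ω)) ∂μ := by simp_rw [hterm]
    _ = ∫⁻ ω in F, ∑' k : ℕ, ENNReal.ofReal (poissonP (Real.exp (W (n + 1) ω)) k)
          * f (g k (W (n + 1) ω)) ∂μ :=
        (lintegral_tsum fun k => (((measurable_poissonP k).comp (hW (n + 1))).ennreal_ofReal.mul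
          ((hf.comp (hgm k)).comp (hW (n + 1)))).aemeasurable).symm
    _ = ∫⁻ ω in F, ∫⁻ y, f y ∂(gKer β₀ γ₁ (W (n + 1) ω)) ∂μ := by
        refine lintegral_congr fun ω => ?_
        rw [gKer_apply, lintegral_glarmaKer _ _ _ hf]

end Markov

/-- the latent Markov chain `(W_t*)` is uniformly ergodic; in particular it
admits a unique stationary invariant probability measure `π`, and when started from `π`
(i.e. when `W_1* ∼ π`), the process `(W_t*)_{t ≥ 1}` is strictly stationary and ergodic
(the shift on the path space preserves the law of the process and is ergodic for it). -/
theorem glarma_latent_uniformly_ergodic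
    {Ω : Type*} [MeasurableSpace Ω] (μ : Measure Ω) [IsProbabilityMeasure μ]
    (Y : ℕ → Ω → ℕ) (W : ℕ → Ω → ℝ) (β₀ γ₁star : ℝ) (Γ : Set ℝ)
    (hΓcompact : IsCompact Γ) (hΓzero : 0 ∉ Γ) (hγmem : γ₁star ∈ Γ)
    (hYmeas : ∀ t, Measurable (Y t)) (hWmeas : ∀ t, Measurable (W t))
    -- the latent GLARMA recursion `W_t = β₀ + γ₁* E*_{t-1}` with
    -- `E*_{t-1} = Y_{t-1} exp (-W_{t-1}) - 1` for `t ≥ 2`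
    (hrec : ∀ t, 2 ≤ t → ∀ ω,
      W t ω = β₀ + γ₁star * ((Y (t - 1) ω : ℝ) * Real.exp (-(W (t - 1) ω)) - 1))
    -- conditionally on the past history, `Y_t ∼ Poisson (exp W_t)`
    (hpois : ∀ t, 1 ≤ t → ∀ k : ℕ,
      (μ[(fun ω => if Y t ω = k then (1 : ℝ) else 0) | histSA W Y (t - 1)])
        =ᵐ[μ] fun ω => poissonP (Real.exp (W t ω)) k) :
    ∃ π : Measure ℝ, IsProbabilityMeasure π ∧
      -- `π` is stationary invariant for the transition kernel
      π.bind (glarmaKer β₀ γ₁star) = π ∧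
      -- uniqueness of the stationary invariant probability measure
      (∀ π' : Measure ℝ, IsProbabilityMeasure π' → π'.bind (glarmaKer β₀ γ₁star) = π' →
        π' = π) ∧
      -- uniform ergodicity: uniform geometric convergence of the n-step kernels to `π`
      (∃ C : ℝ, 0 < C ∧ ∃ ρ : ℝ, 0 ≤ ρ ∧ ρ < 1 ∧
        ∀ (n : ℕ) (x : ℝ) (B : Set ℝ), MeasurableSet B →
          |(glarmaKerIter β₀ γ₁star n x B).toReal - (π B).toReal| ≤ C * ρ ^ n) ∧
      -- started from `π`, the process `(W_t*)_{t ≥ 1}` is strictly stationary and ergodic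
      (Measure.map (W 1) μ = π →
        MeasurePreserving (fun w : ℕ → ℝ => fun i => w (i + 1))
            (Measure.map (fun ω => fun i : ℕ => W (i + 1) ω) μ)
            (Measure.map (fun ω => fun i : ℕ => W (i + 1) ω) μ) ∧
        Ergodic (fun w : ℕ → ℝ => fun i => w (i + 1))
            (Measure.map (fun ω => fun i : ℕ => W (i + 1) ω) μ)) := by
  set K := gKer β₀ γ₁star
  set e : ℝ := Real.exp (-Real.exp (β₀ - γ₁star + 2 * |γ₁star|)) * (1 / 2) with he
  have he0 : 0 < e := by positivity
  have he1 : e < 1 := by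
    have : Real.exp (-Real.exp (β₀ - γ₁star + 2 * |γ₁star|)) ≤ 1 :=
      Real.exp_le_one_iff.2 (by have := Real.exp_pos (β₀ - γ₁star + 2 * |γ₁star|); linarith)
    rw [he]; linarith
  obtain ⟨π, hπ, hconv⟩ := exists_uniform_limit K (β₀ - γ₁star) (ENNReal.ofReal e)
    (ENNReal.ofReal_le_one.2 he1.le) (ENNReal.ofReal_pos.2 he0).ne'
    (gKer_minorization β₀ γ₁star)
  have hsub : 1 - ENNReal.ofReal e = ENNReal.ofReal (1 - e) := by
    rw [ENNReal.ofReal_sub _ he0.le, ENNReal.ofReal_one]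
  rw [hsub] at hconv
  have hU : UnifConv K π fun n => ENNReal.ofReal (1 - e) ^ (n / 2) := hconv
  have hr : Tendsto (fun n : ℕ => ENNReal.ofReal (1 - e) ^ (n / 2)) atTop (nhds 0) :=
    (ENNReal.tendsto_pow_atTop_nhds_zero_of_lt_one
      (ENNReal.ofReal_lt_one.2 (by linarith))).comp (Nat.tendsto_div_const_atTop two_ne_zero)
  refine ⟨π, hπ, hU.invariant hr, fun π' hπ' hinv => hU.unique hr hinv, ?_, fun hstart => ?_⟩
  · -- with `ρ = √(1 - e)`, the rate `(1 - e) ^ (n / 2)` (integer division) is at most `ρ ^ n / ρ`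
    set ρ := Real.sqrt (1 - e) with hρ
    have hρ0 : 0 < ρ := Real.sqrt_pos.2 (by linarith)
    have hρ1 : ρ < 1 := by
      rw [hρ, Real.sqrt_lt' one_pos]; linarith
    have hρ2 : ρ ^ 2 = 1 - e := Real.sq_sqrt (by linarith)
    refine ⟨ρ⁻¹, inv_pos.2 hρ0, ρ, hρ0.le, hρ1, fun n x B hB => ?_⟩
    have hrate : (1 - e) ^ (n / 2) ≤ ρ⁻¹ * ρ ^ n := by
      rw [← hρ2, ← pow_mul, inv_mul_eq_div, le_div_iff₀ hρ0, ← pow_succ]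
      exact pow_le_pow_of_le_one hρ0.le hρ1.le (by omega)
    obtain ⟨h1, h2⟩ := hconv n x (B.indicator 1) (measurable_one.indicator hB)
      (fun z => Set.indicator_le_self' (by simp) z)
    rw [lintegral_indicator_one hB, lintegral_indicator_one hB,
      ← ENNReal.ofReal_pow (by linarith)] at h1 h2
    rw [glarmaKerIter_eq]
    have hpow : 0 ≤ (1 - e) ^ (n / 2) := pow_nonneg (by linarith) _
    have g1 := ENNReal.toReal_mono (by finiteness) h1
    have g2 := ENNReal.toReal_mono (by finiteness) h2
    rw [ENNReal.toReal_add (by finiteness) (by finiteness), ENNReal.toReal_ofReal hpow] at g1 g2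
    refine le_trans ?_ hrate
    rw [abs_le]
    constructor <;> linarith
  · have H := latent_isMarkov hYmeas hWmeas hrec hpois
    have hMP := H.measurePreserving_shift (hU.invariant hr) hstart
    have : IsProbabilityMeasure (μ.map fun ω (i : ℕ) => W (i + 1) ω) :=
      Measure.isProbabilityMeasure_map H.measurable_path.aemeasurable
    exact ⟨hMP, ergodic_shift_of_mixing hMP fun n k S T hS hT =>
      H.mixing_box hU hr hstart n k S T hS hT⟩
end
end

section
/- In the Poisson GLARMA model without covariates and with q=1, for every δ > 0 and every t ≥ 2 there exists a measurable function G (depending only on δ, β₀* and Γ) such that for all γ₁, γ₂ ∈ Γ with |γ₁ − γ₂| ≤ δ, the pointwise bound |exp(W_t(β₀*, γ₁)) − exp(W_t(β₀*, γ₂))| ≤ δ · G(Y_{t−1}, Y_{t−2}, ..., Y_1) holds. -/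
/-! The candidate parameters lie in a bounded set, `|γ₁| ≤ C`, so induction on time gives an
envelope `|W_t(γ₁)| ≤ B_t` that depends only on `Y_{t-1}, …, Y_1` (`abs_glarmaW_le`). On
`(-∞, B]` the exponential is Lipschitz with constant `exp B` (`abs_exp_sub_exp_le`), hence a second
induction, through the recursion
`W_{t+1}(γ₁) - W_{t+1}(γ₂) = (γ₁ - γ₂) E_t(γ₁) + γ₂ Y_t (exp (-W_t(γ₁)) - exp (-W_t(γ₂)))`,
shows that `γ₁ ↦ W_t(γ₁)` is Lipschitz on `[-C, C]` with a constant `D_t` of the same kind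
(`abs_glarmaW_sub_le`). One more use of the Lipschitz bound for `exp` gives the result with
`G = exp (B_t) D_t`, a function that does not even involve `δ`. -/

open MeasureTheory ProbabilityTheory Filter Matrix
open scoped ENNReal

noncomputable section

/-- Envelope for the latent process: `wBound β₀ C Y n` dominates `|W_{n+1}(β₀, γ)|` for all
`|γ| ≤ C`. The index is shifted by one because the process starts at time `1`, so only
`Y_1, …, Y_n` occur. -/
def wBound (β₀ C : ℝ) (Y : ℕ → ℕ) : ℕ → ℝ
  | 0 => |β₀|
  | n + 1 => |β₀| + C * ((Y (n + 1) : ℝ) * Real.exp (wBound β₀ C Y n) + 1)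

/-- Lipschitz constant on `[-C, C]` of `γ ↦ W_{n+1}(β₀, γ)`, with the same index shift as in
`wBound`. -/
def wLip (β₀ C : ℝ) (Y : ℕ → ℕ) : ℕ → ℝ
  | 0 => 0
  | n + 1 => ((Y (n + 1) : ℝ) * Real.exp (wBound β₀ C Y n) + 1)
      + C * ((Y (n + 1) : ℝ) * (Real.exp (wBound β₀ C Y n) * wLip β₀ C Y n))

lemma abs_exp_sub_exp_le {a b M : ℝ} (ha : a ≤ M) (hb : b ≤ M) :
    |Real.exp a - Real.exp b| ≤ Real.exp M * |a - b| := by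
  wlog hab : b ≤ a generalizing a b
  · rw [abs_sub_comm, abs_sub_comm a b]
    exact this hb ha (le_of_not_ge hab)
  rw [abs_of_nonneg (sub_nonneg.2 (Real.exp_le_exp.2 hab)), abs_of_nonneg (sub_nonneg.2 hab)]
  have h1 : Real.exp b = Real.exp a * Real.exp (b - a) := by
    rw [← Real.exp_add]; congr 1; ring
  have h2 := Real.add_one_le_exp (b - a)
  calc Real.exp a - Real.exp b = Real.exp a * (1 - Real.exp (b - a)) := by rw [h1]; ring
    _ ≤ Real.exp a * (a - b) := by refine mul_le_mul_of_nonneg_left ?_ (Real.exp_pos a).le; linarith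
    _ ≤ Real.exp M * (a - b) := by
      have := sub_nonneg.2 hab
      gcongr

/-- Bound on the innovation `E = y exp (-w) - 1` in terms of a bound on `|w|`. -/
lemma abs_innovation_le {w B : ℝ} (y : ℕ) (hw : |w| ≤ B) :
    |(y : ℝ) * Real.exp (-w) - 1| ≤ (y : ℝ) * Real.exp B + 1 := by
  have h1 : Real.exp (-w) ≤ Real.exp B := Real.exp_le_exp.2 ((neg_le_abs w).trans hw)
  calc |(y : ℝ) * Real.exp (-w) - 1| ≤ |(y : ℝ) * Real.exp (-w)| + |(1 : ℝ)| := abs_sub _ _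
    _ = (y : ℝ) * Real.exp (-w) + 1 := by rw [abs_of_nonneg (by positivity), abs_one]
    _ ≤ (y : ℝ) * Real.exp B + 1 := by gcongr

lemma abs_glarmaW_le {β₀ C γ : ℝ} (hγ : |γ| ≤ C) (Y : ℕ → ℕ) (n : ℕ) :
    |glarmaW β₀ γ Y (n + 1)| ≤ wBound β₀ C Y n := by
  have hC : 0 ≤ C := (abs_nonneg γ).trans hγ
  induction n with
  | zero => simp [glarmaW, wBound]
  | succ n ih =>
    simp only [glarmaW, wBound]
    refine (abs_add_le _ _).trans ?_
    rw [abs_mul]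
    have := abs_innovation_le (Y (n + 1)) ih
    gcongr

lemma abs_glarmaW_sub_le {β₀ C γ₁ γ₂ : ℝ} (h₁ : |γ₁| ≤ C) (h₂ : |γ₂| ≤ C) (Y : ℕ → ℕ) (n : ℕ) :
    |glarmaW β₀ γ₁ Y (n + 1) - glarmaW β₀ γ₂ Y (n + 1)| ≤ wLip β₀ C Y n * |γ₁ - γ₂| := by
  have hC : 0 ≤ C := (abs_nonneg γ₁).trans h₁
  induction n with
  | zero => simp [glarmaW, wLip]
  | succ n ih =>
    have b₁ := abs_glarmaW_le (β₀ := β₀) h₁ Y n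
    have b₂ := abs_glarmaW_le (β₀ := β₀) h₂ Y n
    simp only [glarmaW, wLip]
    set w₁ := glarmaW β₀ γ₁ Y (n + 1)
    set w₂ := glarmaW β₀ γ₂ Y (n + 1)
    set B := wBound β₀ C Y n
    set D := wLip β₀ C Y n
    set y := Y (n + 1)
    have hE := abs_innovation_le y b₁
    have hexp : |Real.exp (-w₁) - Real.exp (-w₂)| ≤ Real.exp B * (D * |γ₁ - γ₂|) := by
      refine (abs_exp_sub_exp_le ((neg_le_abs w₁).trans b₁) ((neg_le_abs w₂).trans b₂)).trans ?_
      rw [show -w₁ - -w₂ = -(w₁ - w₂) by ring, abs_neg]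
      gcongr
    calc |β₀ + γ₁ * ((y : ℝ) * Real.exp (-w₁) - 1) - (β₀ + γ₂ * ((y : ℝ) * Real.exp (-w₂) - 1))|
        = |(γ₁ - γ₂) * ((y : ℝ) * Real.exp (-w₁) - 1)
            + γ₂ * ((y : ℝ) * (Real.exp (-w₁) - Real.exp (-w₂)))| := by
          congr 1; ring
      _ ≤ |γ₁ - γ₂| * |(y : ℝ) * Real.exp (-w₁) - 1|
            + |γ₂| * ((y : ℝ) * |Real.exp (-w₁) - Real.exp (-w₂)|) := by
          refine (abs_add_le _ _).trans_eq ?_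
          rw [abs_mul, abs_mul γ₂, abs_mul (y : ℝ), Nat.abs_cast]
      _ ≤ |γ₁ - γ₂| * ((y : ℝ) * Real.exp B + 1)
            + C * ((y : ℝ) * (Real.exp B * (D * |γ₁ - γ₂|))) := by gcongr
      _ = _ := by ring

lemma wLip_nonneg {C : ℝ} (hC : 0 ≤ C) (β₀ : ℝ) (Y : ℕ → ℕ) (n : ℕ) : 0 ≤ wLip β₀ C Y n := by
  induction n with
  | zero => simp [wLip]
  | succ n ih => simp only [wLip]; positivity

lemma measurable_wBound (β₀ C : ℝ) (n : ℕ) : Measurable fun Y => wBound β₀ C Y n := by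
  induction n with
  | zero => simp only [wBound]; exact measurable_const
  | succ n ih =>
    have hY : Measurable fun Y : ℕ → ℕ => (Y (n + 1) : ℝ) :=
      (measurable_from_top (f := fun k : ℕ => (k : ℝ))).comp (measurable_pi_apply (n + 1))
    simp only [wBound]
    fun_prop

lemma measurable_wLip (β₀ C : ℝ) (n : ℕ) : Measurable fun Y => wLip β₀ C Y n := by
  induction n with
  | zero => simp only [wLip]; exact measurable_const
  | succ n ih =>
    have hY : Measurable fun Y : ℕ → ℕ => (Y (n + 1) : ℝ) :=
      (measurable_from_top (f := fun k : ℕ => (k : ℝ))).comp (measurable_pi_apply (n + 1))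
    have hB := measurable_wBound β₀ C n
    simp only [wLip]
    fun_prop

lemma wBound_congr (β₀ C : ℝ) {Y Y' : ℕ → ℕ} {n : ℕ}
    (h : ∀ s, 1 ≤ s → s ≤ n → Y s = Y' s) : wBound β₀ C Y n = wBound β₀ C Y' n := by
  induction n with
  | zero => rfl
  | succ n ih =>
    simp only [wBound]
    rw [ih fun s hs hsn => h s hs (by omega), h (n + 1) (by omega) le_rfl]

lemma wLip_congr (β₀ C : ℝ) {Y Y' : ℕ → ℕ} {n : ℕ}
    (h : ∀ s, 1 ≤ s → s ≤ n → Y s = Y' s) : wLip β₀ C Y n = wLip β₀ C Y' n := by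
  induction n with
  | zero => rfl
  | succ n ih =>
    have h' : ∀ s, 1 ≤ s → s ≤ n → Y s = Y' s := fun s hs hsn => h s hs (by omega)
    simp only [wLip]
    rw [ih h', wBound_congr β₀ C h', h (n + 1) (by omega) le_rfl]

/-- for every `δ > 0` and every `t ≥ 2` there is a measurable function `G`
(depending only on `δ`, `β₀*`, `Γ` and `t`, and on the observations only through
`Y_{t-1}, …, Y_1`) such that for all `γ₁, γ₂ ∈ Γ` with `|γ₁ - γ₂| ≤ δ`,
`|exp (W_t(β₀*, γ₁)) - exp (W_t(β₀*, γ₂))| ≤ δ · G(Y_{t-1}, …, Y_1)` pointwise. -/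
theorem glarma_expW_increment_bound
    (β₀ : ℝ) (Γ : Set ℝ) (hΓcompact : IsCompact Γ) (hΓzero : 0 ∉ Γ)
    (δ : ℝ) (hδ : 0 < δ) (t : ℕ) (ht : 2 ≤ t) :
    ∃ G : (ℕ → ℕ) → ℝ, Measurable G ∧
      (∀ Y Y' : ℕ → ℕ, (∀ s, 1 ≤ s → s ≤ t - 1 → Y s = Y' s) → G Y = G Y') ∧
      ∀ (Y : ℕ → ℕ) (γ₁ γ₂ : ℝ), γ₁ ∈ Γ → γ₂ ∈ Γ → |γ₁ - γ₂| ≤ δ →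
        |Real.exp (glarmaW β₀ γ₁ Y t) - Real.exp (glarmaW β₀ γ₂ Y t)| ≤ δ * G Y := by
  obtain ⟨C, hC⟩ := hΓcompact.isBounded.exists_norm_le
  simp only [Real.norm_eq_abs] at hC
  obtain ⟨n, rfl⟩ : ∃ n, t = n + 1 := ⟨t - 1, by omega⟩
  refine ⟨fun Y => Real.exp (wBound β₀ C Y n) * wLip β₀ C Y n,
    (measurable_wBound β₀ C n).exp.mul (measurable_wLip β₀ C n), ?_, ?_⟩
  · intro Y Y' h
    have h' : ∀ s, 1 ≤ s → s ≤ n → Y s = Y' s := fun s hs hsn => h s hs (by omega)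
    simp only [wBound_congr β₀ C h', wLip_congr β₀ C h']
  · intro Y γ₁ γ₂ hγ₁ hγ₂ hδγ
    have h₁ := hC γ₁ hγ₁
    have h₂ := hC γ₂ hγ₂
    have hD := wLip_nonneg ((abs_nonneg γ₁).trans h₁) β₀ Y n
    calc |Real.exp (glarmaW β₀ γ₁ Y (n + 1)) - Real.exp (glarmaW β₀ γ₂ Y (n + 1))|
        ≤ Real.exp (wBound β₀ C Y n) * |glarmaW β₀ γ₁ Y (n + 1) - glarmaW β₀ γ₂ Y (n + 1)| :=
          abs_exp_sub_exp_le ((le_abs_self _).trans (abs_glarmaW_le h₁ Y n))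
            ((le_abs_self _).trans (abs_glarmaW_le h₂ Y n))
      _ ≤ Real.exp (wBound β₀ C Y n) * (wLip β₀ C Y n * δ) := by
          gcongr
          exact (abs_glarmaW_sub_le h₁ h₂ Y n).trans (by gcongr)
      _ = δ * (Real.exp (wBound β₀ C Y n) * wLip β₀ C Y n) := by ring
end
end
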